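/- Let (Ω, ℱ, ℙ) be a probability space and let φ: Ω × ℝ^d → 𝒟_0 be ℱ ⊗ ℬ(ℝ^d)/𝒟-measurable and such that φ(ω, ·): ℝ^d → (𝒟_0, ‖·‖_0) is continuous for every ω ∈ Ω. Suppose there are p > 2d and c > 0 such that E[‖φ(·, x) − φ(·, y)‖_0^p] ≤ c |x−y|^p for all x, y ∈ ℝ^d. Fix α > 1 and let f_α(x) = (max(x^d (log⁺ x)^α, 1))^{−1} for x ≥ 0, where log⁺ x = max(log x, 0). Then the function Z: Ω → [0, ∞] defined by Z(ω) = ( ∫_{ℝ^d} ∫_{ℝ^d} ( ‖φ(ω,x) − φ(ω,y)‖_0 / |x−y| )^p f_α(|x|) f_α(|y|) dx dy )^{1/p} is a measurable, p-integrable random variable, and there is a constant c_0 > 0 depending only on α, p, d such that for all x, y ∈ ℝ^d and all ω ∈ Ω: ‖φ(ω,x) − φ(ω,y)‖_0 ≤ c_0 Z(ω) |x−y|^{1 − 2d/p} · max( (max(|x|,|y|))^{2d/p} (log⁺(max(|x|,|y|)))^{2α/p}, 1 ). -/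

import Mathlib

open MeasureTheory Filter Set Topology
open scoped ENNReal

noncomputable section

/-- The time interval `[0, T]` as a type. -/
abbrev Icc0 (T : ℝ) : Type := ↥(Set.Icc (0 : ℝ) T)

/-- A function on `[0, T]` is càdlàg if it is right-continuous and has left limits. -/
def IsCadlag {E : Type*} [TopologicalSpace E] {T : ℝ} (f : Icc0 T → E) : Prop :=
  (∀ t, Tendsto f (nhdsWithin t (Set.Ioi t)) (nhds (f t))) ∧
    (∀ t, ∃ L, Tendsto f (nhdsWithin t (Set.Iio t)) (nhds L))

/-- `𝒟₀`: the space of càdlàg functions from `[0, T]` to `ℝ^d`. -/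
def D0 (T : ℝ) (d : ℕ) : Type :=
  {f : Icc0 T → EuclideanSpace ℝ (Fin d) // IsCadlag f}

/-- The uniform distance `‖x − y‖₀` on `𝒟₀`. -/
noncomputable def unifDist {T : ℝ} {d : ℕ} (f g : D0 T d) : ℝ :=
  ⨆ t : Icc0 T, dist (f.1 t) (g.1 t)

/-- `𝒟`: the σ-algebra on `𝒟₀` generated by the evaluation maps. -/
def Dsigma (T : ℝ) (d : ℕ) : MeasurableSpace (D0 T d) :=
  ⨆ t : Icc0 T, MeasurableSpace.comap (fun f => f.1 t) inferInstance

/-- Continuity of a map `ℝ^d → (𝒟₀, ‖·‖₀)`. -/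
def ContinuousInD0 {T : ℝ} {d : ℕ} (F : EuclideanSpace ℝ (Fin d) → D0 T d) : Prop :=
  ∀ x, ∀ ε > (0 : ℝ), ∃ δ > (0 : ℝ), ∀ y, dist x y < δ → unifDist (F x) (F y) < ε

/-- The weight `f_α(x) = (max(x^d (log⁺ x)^α, 1))⁻¹`. -/
noncomputable def grrWeight (d : ℕ) (α : ℝ) (x : ℝ) : ℝ :=
  (max (x ^ d * (max (Real.log x) 0) ^ α) 1)⁻¹

/-- The Garsia–Rodemich–Rumsey functional
`Z(ω) = (∫∫ (‖φ(ω,x) − φ(ω,y)‖₀ / |x−y|)^p f_α(|x|) f_α(|y|) dx dy)^{1/p}`. -/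
noncomputable def grrZ {Ω : Type*} {T : ℝ} {d : ℕ} (p α : ℝ)
    (φ : Ω → EuclideanSpace ℝ (Fin d) → D0 T d) (ω : Ω) : ℝ≥0∞ :=
  (∫⁻ x : EuclideanSpace ℝ (Fin d), ∫⁻ y : EuclideanSpace ℝ (Fin d),
      ENNReal.ofReal ((unifDist (φ ω x) (φ ω y) / dist x y) ^ p *
        grrWeight d α ‖x‖ * grrWeight d α ‖y‖) ∂volume ∂volume) ^ (1 / p)

/-!
Fix `ω` and let `ν` be the measure with density `f_α(|x|)`, so that `Z(ω) ^ p` is the unweighted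
energy of `φ(ω, ·)` with respect to `ν`. Replace the points `x` and `y` by random points of balls
around them, distributed according to normalized `ν`. By Jensen's inequality the mean distance of
the images of two such random points is at most `Z(ω)` times the distance of the points times the
`-1 / p`-th power of the `ν`-masses of the two balls. Halving the radii down to `x` and to `y` gives
geometric series that converge because `p > 2 d`. For balls within distance `3 R` of the origin the
density is at least a constant multiple of `f_α(R)`, whose inverse produces the factor growing in
`|x|` and `|y|`. Since `α > 1` makes `ν` finite, Tonelli's theorem turns the moment condition into
the `p`-integrability of `Z`. Separability of the target is never needed: right-continuity reduces
the uniform distance to countably many times, which makes `(ω, x, y) ↦ ‖φ(ω, x) − φ(ω, y)‖₀`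
measurable.
-/

open Bornology
open scoped ProbabilityTheory

/-! ### The path space `𝒟₀` -/

/-- A right-continuous function is determined by its values on such a set: points isolated on the
right have to be added to a dense set. -/
lemma exists_countable_forall_mem_closure_inter_Ici (α : Type*) [LinearOrder α]
    [TopologicalSpace α] [OrderTopology α] [SecondCountableTopology α] :
    ∃ Q : Set α, Q.Countable ∧ ∀ t, t ∈ closure (Q ∩ Ici t) := by
  obtain ⟨D, hD_countable, hD_dense⟩ := TopologicalSpace.exists_countable_dense α
  refine ⟨D ∪ {t | 𝓝[>] t = ⊥}, hD_countable.union countable_setOfPred_isolated_right,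
    fun t => ?_⟩
  by_cases ht : 𝓝[>] t = ⊥
  · exact subset_closure ⟨Or.inr ht, self_mem_Ici⟩
  · have : (𝓝[>] t).NeBot := ⟨ht⟩
    have ht_right : t ∈ closure (Ioi t) := mem_closure_iff_nhdsWithin_neBot.2 this
    rw [mem_closure_iff]
    intro U hU htU
    obtain ⟨s, ⟨hsU, hts⟩, hsD⟩ := hD_dense.inter_open_nonempty (U ∩ Ioi t) (hU.inter isOpen_Ioi)
      (mem_closure_iff.1 ht_right U hU htU)
    exact ⟨s, hsU, Or.inl hsD, le_of_lt hts⟩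

namespace IsCadlag

lemma continuousWithinAt_Ici {E : Type*} [TopologicalSpace E] {T : ℝ} {f : Icc0 T → E}
    (hf : IsCadlag f) (t : Icc0 T) : ContinuousWithinAt f (Ici t) t :=
  continuousWithinAt_Ioi_iff_Ici.1 (hf.1 t)

lemma isBounded_range {E : Type*} [PseudoMetricSpace E] {T : ℝ} {f : Icc0 T → E}
    (hf : IsCadlag f) : IsBounded (range f) := by
  rw [← image_univ]
  refine isCompact_univ.induction_on (p := fun s => IsBounded (f '' s)) (by simp)
    (fun _ _ hst ht => ht.subset (image_mono hst))
    (fun _ _ hs ht => by simpa only [image_union] using hs.union ht) fun t _ => ?_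
  obtain ⟨L, hL⟩ := hf.2 t
  obtain ⟨U, hU, hU_bdd⟩ := Metric.exists_isBounded_image_of_tendsto hL
  obtain ⟨V, hV, hV_bdd⟩ :=
    Metric.exists_isBounded_image_of_tendsto (hf.continuousWithinAt_Ici t).tendsto
  refine ⟨U ∪ V, ?_, by simpa only [image_union] using hU_bdd.union hV_bdd⟩
  rw [nhdsWithin_univ, ← nhdsLT_sup_nhdsGE t]
  exact union_mem_sup hU hV

end IsCadlag

section UniformDistance

variable {T : ℝ} {d : ℕ}

lemma bddAbove_range_dist_D0 (f g : D0 T d) :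
    BddAbove (range fun t => dist (f.1 t) (g.1 t)) := by
  obtain ⟨C, hC⟩ := Metric.isBounded_iff.1 (f.2.isBounded_range.union g.2.isBounded_range)
  refine ⟨C, forall_mem_range.2 fun t => hC (Or.inl (mem_range_self t)) (Or.inr (mem_range_self t))⟩

lemma dist_apply_le_unifDist (f g : D0 T d) (t : Icc0 T) : dist (f.1 t) (g.1 t) ≤ unifDist f g :=
  le_ciSup (bddAbove_range_dist_D0 f g) t

lemma unifDist_nonneg (f g : D0 T d) : 0 ≤ unifDist f g :=
  Real.iSup_nonneg fun _ => dist_nonneg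

lemma unifDist_triangle (f g h : D0 T d) : unifDist f h ≤ unifDist f g + unifDist g h :=
  Real.iSup_le (fun t => (dist_triangle _ (g.1 t) _).trans
    (add_le_add (dist_apply_le_unifDist f g t) (dist_apply_le_unifDist g h t)))
    (add_nonneg (unifDist_nonneg f g) (unifDist_nonneg g h))

/-- The uniform metric on `𝒟₀`. The field `edist` is chosen so that
`edist f g = ENNReal.ofReal (unifDist f g)` holds definitionally. -/
instance : PseudoMetricSpace (D0 T d) where
  dist := unifDist
  edist f g := ENNReal.ofReal (unifDist f g)
  edist_dist _ _ := rfl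
  dist_self f := by simp [unifDist]
  dist_comm f g := by simp [unifDist, dist_comm]
  dist_triangle := unifDist_triangle

lemma dist_eq_unifDist (f g : D0 T d) : dist f g = unifDist f g := rfl

lemma ContinuousInD0.continuous {F : EuclideanSpace ℝ (Fin d) → D0 T d} (hF : ContinuousInD0 F) :
    Continuous F := by
  refine Metric.continuous_iff.2 fun x ε hε => ?_
  obtain ⟨δ, hδ, h⟩ := hF x ε hε
  refine ⟨δ, hδ, fun y hy => ?_⟩
  rw [dist_comm]
  exact h y (by rwa [dist_comm])

lemma exists_countable_unifDist_eq_iSup (T : ℝ) (d : ℕ) : ∃ Q : Set (Icc0 T), Q.Countable ∧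
    ∀ f g : D0 T d, unifDist f g = ⨆ t : Q, dist (f.1 t) (g.1 t) := by
  obtain ⟨Q, hQ_countable, hQ⟩ := exists_countable_forall_mem_closure_inter_Ici (Icc0 T)
  refine ⟨Q, hQ_countable, fun f g => le_antisymm ?_ ?_⟩
  · have hbdd : BddAbove (range fun t : Q => dist (f.1 t) (g.1 t)) :=
      (bddAbove_range_dist_D0 f g).mono
        (range_comp_subset_range Subtype.val fun t => dist (f.1 t) (g.1 t))
    refine Real.iSup_le (fun t => ?_) (Real.iSup_nonneg fun _ => dist_nonneg)
    have hright : ContinuousWithinAt (fun s => dist (f.1 s) (g.1 s)) (Ici t) t :=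
      Tendsto.dist (f.2.continuousWithinAt_Ici t) (g.2.continuousWithinAt_Ici t)
    exact (hright.mono inter_subset_right).closure_le (hQ t) continuousWithinAt_const
      fun s hs => le_ciSup hbdd (⟨s, hs.1⟩ : Q)
  · exact Real.iSup_le (fun t => dist_apply_le_unifDist f g t) (unifDist_nonneg f g)

lemma measurable_eval_D0 (t : Icc0 T) : Measurable[Dsigma T d] fun f : D0 T d => f.1 t :=
  (comap_measurable _).mono (le_iSup (fun t => MeasurableSpace.comap
    (fun f : D0 T d => f.1 t) inferInstance) t) le_rfl

/-- Continuity of the uniform metric is of no use here, since `𝒟` is strictly smaller than the Borel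
σ-algebra; what helps is that the supremum may be taken over countably many times. -/
lemma measurable_unifDist {β : Type*} [MeasurableSpace β] {f g : β → D0 T d}
    (hf : Measurable[_, Dsigma T d] f) (hg : Measurable[_, Dsigma T d] g) :
    Measurable fun b => unifDist (f b) (g b) := by
  obtain ⟨Q, hQ_countable, hQ⟩ := exists_countable_unifDist_eq_iSup T d
  have := hQ_countable.to_subtype
  simp only [hQ]
  exact Measurable.iSup fun t : Q =>
    ((measurable_eval_D0 t.1).comp hf).dist ((measurable_eval_D0 t.1).comp hg)

lemma measurable_edist_uncurry_D0 {Ω X : Type*} [MeasurableSpace Ω] [MeasurableSpace X]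
    {φ : Ω → X → D0 T d} (hφ : Measurable[_, Dsigma T d] fun q : Ω × X => φ q.1 q.2) :
    Measurable fun q : Ω × X × X => edist (φ q.1 q.2.1) (φ q.1 q.2.2) :=
  (measurable_unifDist (hφ.comp (measurable_fst.prodMk measurable_snd.fst))
    (hφ.comp (measurable_fst.prodMk measurable_snd.snd))).ennreal_ofReal

end UniformDistance

/-! ### Mean distances and chaining -/

lemma le_tsum_of_le_add_of_tendsto_zero {a b : ℕ → ℝ≥0∞} (hab : ∀ n, a n ≤ a (n + 1) + b n)
    (ha : Tendsto a atTop (𝓝 0)) : a 0 ≤ ∑' n, b n := by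
  have hpartial (n : ℕ) : a 0 ≤ a n + ∑ k ∈ Finset.range n, b k := by
    induction n with
    | zero => simp
    | succ n ih =>
      rw [Finset.sum_range_succ, add_comm (∑ k ∈ _, b k), ← add_assoc]
      exact ih.trans (by gcongr; exact hab n)
  have hlim : Tendsto (fun n => a n + ∑' k, b k) atTop (𝓝 (∑' k, b k)) := by
    simpa only [zero_add] using ha.add_const (∑' k, b k)
  exact ge_of_tendsto' hlim fun n =>
    (hpartial n).trans (by gcongr; exact ENNReal.sum_le_tsum _)

lemma lintegral_le_lintegral_rpow_rpow {α : Type*} [MeasurableSpace α] (μ : Measure α)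
    [IsProbabilityMeasure μ] {f : α → ℝ≥0∞} (hf : AEMeasurable f μ) {p : ℝ} (hp : 1 ≤ p) :
    ∫⁻ x, f x ∂μ ≤ (∫⁻ x, f x ^ p ∂μ) ^ (1 / p) := by
  simpa only [eLpNorm'_eq_lintegral_enorm, enorm_eq_self, ENNReal.rpow_one, div_one] using
    eLpNorm'_le_eLpNorm'_of_exponent_le one_pos hp μ hf.aestronglyMeasurable

section MeanEDist

variable {X Y : Type*} [MeasurableSpace X] [PseudoEMetricSpace Y]

/-- The expected distance `E[d(F(U), F(V))]` of the images under `F` of independent points `U ∼ μ`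
and `V ∼ ν`. It satisfies the triangle inequality in `μ` and `ν`, which makes it possible to chain
along probability measures in place of points. -/
def meanEDist (F : X → Y) (μ ν : Measure X) : ℝ≥0∞ :=
  ∫⁻ u, ∫⁻ v, edist (F u) (F v) ∂ν ∂μ

/-- The Garsia–Rodemich–Rumsey (or Gagliardo) energy of `F` with respect to `μ`: the double
integral of the `p`-th power of the difference quotient. -/
def grrEnergy [EDist X] (μ : Measure X) (p : ℝ) (F : X → Y) : ℝ≥0∞ :=
  ∫⁻ u, ∫⁻ v, (edist (F u) (F v) / edist u v) ^ p ∂μ ∂μ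

variable {F : X → Y}

lemma meanEDist_comm (hF : Measurable fun q : X × X => edist (F q.1) (F q.2)) (μ ν : Measure X)
    [SFinite μ] [SFinite ν] : meanEDist F μ ν = meanEDist F ν μ := by
  simp only [meanEDist]
  rw [lintegral_lintegral_swap hF.aemeasurable]
  simp only [edist_comm]

lemma meanEDist_dirac_left (hF : Measurable fun q : X × X => edist (F q.1) (F q.2)) (x : X)
    (ν : Measure X) [SFinite ν] :
    meanEDist F (Measure.dirac x) ν = ∫⁻ v, edist (F x) (F v) ∂ν :=
  lintegral_dirac' x hF.lintegral_prod_right'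

lemma meanEDist_dirac_dirac (hF : Measurable fun q : X × X => edist (F q.1) (F q.2)) (x y : X) :
    meanEDist F (Measure.dirac x) (Measure.dirac y) = edist (F x) (F y) :=
  (meanEDist_dirac_left hF x _).trans (lintegral_dirac' y (hF.comp measurable_prodMk_left))

lemma meanEDist_triangle (hF : Measurable fun q : X × X => edist (F q.1) (F q.2))
    (μ ν κ : Measure X) [IsProbabilityMeasure μ] [IsProbabilityMeasure ν]
    [IsProbabilityMeasure κ] :
    meanEDist F μ κ ≤ meanEDist F μ ν + meanEDist F ν κ := by
  have hinner (u : X) : ∫⁻ w, edist (F u) (F w) ∂κ ≤ ∫⁻ v, edist (F u) (F v) ∂ν + meanEDist F ν κ :=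
    calc ∫⁻ w, edist (F u) (F w) ∂κ
        = ∫⁻ _, ∫⁻ w, edist (F u) (F w) ∂κ ∂ν := by rw [lintegral_const, measure_univ, mul_one]
      _ ≤ ∫⁻ v, ∫⁻ w, (edist (F u) (F v) + edist (F v) (F w)) ∂κ ∂ν := by
        gcongr with v w; exact edist_triangle _ _ _
      _ = ∫⁻ v, (edist (F u) (F v) + ∫⁻ w, edist (F v) (F w) ∂κ) ∂ν := by
        refine lintegral_congr fun v => ?_
        rw [lintegral_add_left measurable_const, lintegral_const, measure_univ, mul_one]
      _ = ∫⁻ v, edist (F u) (F v) ∂ν + meanEDist F ν κ :=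
        lintegral_add_left (hF.comp measurable_prodMk_left) _
  calc meanEDist F μ κ ≤ ∫⁻ u, (∫⁻ v, edist (F u) (F v) ∂ν + meanEDist F ν κ) ∂μ :=
        lintegral_mono hinner
    _ = meanEDist F μ ν + meanEDist F ν κ := by
        rw [lintegral_add_right _ measurable_const, lintegral_const, measure_univ, mul_one]
        rfl

end MeanEDist

lemma edist_map_le_mul_div {X Y : Type*} [PseudoMetricSpace X] [PseudoEMetricSpace Y] {F : X → Y}
    (hF : Continuous F) (u v : X) :
    edist (F u) (F v) ≤ edist u v * (edist (F u) (F v) / edist u v) := by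
  by_cases huv : edist u v = 0
  · have : Inseparable (F u) (F v) := (EMetric.inseparable_iff.2 huv).map hF
    simp [this.edist_eq_zero]
  · exact (ENNReal.mul_div_cancel huv (edist_ne_top u v)).ge

lemma lintegral_cond_le {α : Type*} [MeasurableSpace α] (μ : Measure α) (s : Set α)
    (f : α → ℝ≥0∞) : ∫⁻ x, f x ∂μ[|s] ≤ (μ s)⁻¹ * ∫⁻ x, f x ∂μ := by
  rw [ProbabilityTheory.cond, lintegral_smul_measure, smul_eq_mul]
  gcongr
  exact Measure.restrict_le_self

/-- `μ` is finite on the ball of radius `r` about `z` and gives each ball of radius `s ≤ r` about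
`z` at least the mass `κ * s ^ Q`, as a measure of dimension at most `Q` does. -/
structure IsLowerRegularAt {X : Type*} [PseudoMetricSpace X] [MeasurableSpace X] (μ : Measure X)
    (κ Q r : ℝ) (z : X) : Prop where
  pos : 0 < κ
  measure_ball_lt_top : μ (Metric.ball z r) < ⊤
  le_measure_ball : ∀ s, 0 < s → s ≤ r → ENNReal.ofReal (κ * s ^ Q) ≤ μ (Metric.ball z s)

lemma IsLowerRegularAt.isProbabilityMeasure_cond_ball {X : Type*} [PseudoMetricSpace X]
    [MeasurableSpace X] {μ : Measure X} {κ Q r s : ℝ} {z : X} (hz : IsLowerRegularAt μ κ Q r z)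
    (hs : 0 < s) (hsr : s ≤ r) : IsProbabilityMeasure μ[|Metric.ball z s] := by
  have hκ := hz.pos
  refine ProbabilityTheory.cond_isProbabilityMeasure_of_finite ?_ ?_
  · exact ((ENNReal.ofReal_pos.2 (by positivity)).trans_le (hz.le_measure_ball s hs hsr)).ne'
  · exact ((measure_mono (Metric.ball_subset_ball hsr)).trans_lt hz.measure_ball_lt_top).ne

section MetricMeasureSpace

variable {X Y : Type*} [PseudoMetricSpace X] [MeasurableSpace X] [OpensMeasurableSpace X]
  [SecondCountableTopology X] [PseudoEMetricSpace Y] {F : X → Y} {μ : Measure X}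

lemma measurable_edist_map (hF : Continuous F) :
    Measurable fun q : X × X => edist (F q.1) (F q.2) :=
  ((hF.comp continuous_fst).edist (hF.comp continuous_snd)).measurable

lemma tendsto_meanEDist_dirac_cond_ball (hF : Continuous F) (z : X) {s : ℕ → ℝ}
    (hs : Tendsto s atTop (𝓝 0)) :
    Tendsto (fun n => meanEDist F (Measure.dirac z) μ[|Metric.ball z (s n)]) atTop (𝓝 0) := by
  simp only [meanEDist_dirac_left (measurable_edist_map hF)]
  refine ENNReal.tendsto_nhds_zero.2 fun ε hε => ?_
  have hnear : ∀ᶠ v in 𝓝 z, edist (F z) (F v) ≤ ε := by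
    simp only [edist_comm (F z)]
    exact (EMetric.tendsto_nhds.1 (hF.tendsto z) ε hε).mono fun _ => le_of_lt
  obtain ⟨η, hη, hball⟩ := Metric.eventually_nhds_iff_ball.1 hnear
  filter_upwards [hs.eventually_lt_const hη] with n hn
  calc ∫⁻ v, edist (F z) (F v) ∂μ[|Metric.ball z (s n)]
      ≤ ∫⁻ _, ε ∂μ[|Metric.ball z (s n)] := by
        refine lintegral_mono_ae ?_
        filter_upwards [ProbabilityTheory.ae_cond_mem measurableSet_ball] with v hv
        exact hball v (Metric.ball_subset_ball hn.le hv)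
    _ ≤ ε := by
        rw [lintegral_const]
        exact mul_le_of_le_one_right' prob_le_one

lemma meanEDist_cond_cond_le (hF : Continuous F) {p : ℝ} (hp : 1 ≤ p) {A B : Set X}
    (hA : MeasurableSet A) (hB : MeasurableSet B) [IsProbabilityMeasure μ[|A]]
    [IsProbabilityMeasure μ[|B]] {δ : ℝ≥0∞} (hδ : ∀ u ∈ A, ∀ v ∈ B, edist u v ≤ δ) :
    meanEDist F μ[|A] μ[|B] ≤ δ * ((μ A)⁻¹ * (μ B)⁻¹ * grrEnergy μ p F) ^ (1 / p) := by
  set g : X → X → ℝ≥0∞ := fun u v => edist (F u) (F v) / edist u v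
  have hg : Measurable (Function.uncurry g) := (measurable_edist_map hF).div measurable_edist
  calc meanEDist F μ[|A] μ[|B] ≤ ∫⁻ u, ∫⁻ v, δ * g u v ∂μ[|B] ∂μ[|A] := by
        refine lintegral_mono_ae ?_
        filter_upwards [ProbabilityTheory.ae_cond_mem hA] with u hu
        refine lintegral_mono_ae ?_
        filter_upwards [ProbabilityTheory.ae_cond_mem hB] with v hv
        exact (edist_map_le_mul_div hF u v).trans (by gcongr; exact hδ u hu v hv)
    _ = δ * ∫⁻ q, g q.1 q.2 ∂(μ[|A].prod μ[|B]) := by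
        rw [lintegral_lintegral (f := fun u v => δ * g u v) (hg.const_mul δ).aemeasurable,
          lintegral_const_mul δ (f := fun q : X × X => g q.1 q.2) hg]
    _ ≤ δ * (∫⁻ q, g q.1 q.2 ^ p ∂(μ[|A].prod μ[|B])) ^ (1 / p) := by
        gcongr
        exact lintegral_le_lintegral_rpow_rpow _ hg.aemeasurable hp
    _ ≤ δ * ((μ A)⁻¹ * (μ B)⁻¹ * grrEnergy μ p F) ^ (1 / p) := by
        have hB₀ : μ B ≠ 0 := fun h =>
          IsProbabilityMeasure.ne_zero μ[|B] (ProbabilityTheory.cond_eq_zero_of_meas_eq_zero h)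
        have hgp : Measurable fun q : X × X => g q.1 q.2 ^ p := hg.pow_const p
        gcongr
        calc ∫⁻ q, g q.1 q.2 ^ p ∂(μ[|A].prod μ[|B])
            = ∫⁻ u, ∫⁻ v, g u v ^ p ∂μ[|B] ∂μ[|A] :=
              (lintegral_lintegral (f := fun u v => g u v ^ p) hgp.aemeasurable).symm
          _ ≤ (μ A)⁻¹ * ∫⁻ u, ∫⁻ v, g u v ^ p ∂μ[|B] ∂μ := lintegral_cond_le _ _ _
          _ ≤ (μ A)⁻¹ * ∫⁻ u, (μ B)⁻¹ * ∫⁻ v, g u v ^ p ∂μ ∂μ := by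
            gcongr with u
            exact lintegral_cond_le _ _ _
          _ = (μ A)⁻¹ * (μ B)⁻¹ * grrEnergy μ p F := by
            rw [lintegral_const_mul' _ _ (ENNReal.inv_ne_top.2 hB₀), ← mul_assoc]
            rfl

lemma meanEDist_cond_ball_le (hF : Continuous F) {p κ Q r s s' t : ℝ} {x y : X} (hp : 1 ≤ p)
    (hQ : 0 ≤ Q) (hx : IsLowerRegularAt μ κ Q r x) (hy : IsLowerRegularAt μ κ Q r y)
    (ht : 0 < t) (hts : t ≤ s) (hst : s ≤ 2 * t) (hsr : s ≤ r) (hts' : t ≤ s')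
    (hst' : s' ≤ 2 * t) (hsr' : s' ≤ r) (hxy : dist x y ≤ 2 * t) :
    meanEDist F μ[|Metric.ball x s] μ[|Metric.ball y s'] ≤
      ENNReal.ofReal (6 * κ ^ (-(2 / p)) * t ^ (1 - 2 * Q / p)) * grrEnergy μ p F ^ (1 / p) := by
  have hκ := hx.pos
  have hs := ht.trans_le hts
  have hs' := ht.trans_le hts'
  have := hx.isProbabilityMeasure_cond_ball hs hsr
  have := hy.isProbabilityMeasure_cond_ball hs' hsr'
  have hdiam : ∀ u ∈ Metric.ball x s, ∀ v ∈ Metric.ball y s', edist u v ≤ ENNReal.ofReal (6 * t) :=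
    fun u hu v hv => by
      rw [edist_dist]
      refine ENNReal.ofReal_le_ofReal ?_
      linarith [dist_triangle4 u x y v, Metric.mem_ball.1 hu, Metric.mem_ball'.1 hv]
  have hmass {z : X} {σ : ℝ} (hz : IsLowerRegularAt μ κ Q r z) (htσ : t ≤ σ) (hσr : σ ≤ r) :
      (μ (Metric.ball z σ))⁻¹ ≤ ENNReal.ofReal (κ * t ^ Q)⁻¹ := by
    rw [ENNReal.ofReal_inv_of_pos (by positivity), ENNReal.inv_le_inv]
    refine le_trans ?_ (hz.le_measure_ball σ (ht.trans_le htσ) hσr)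
    gcongr
  have hexponents : 6 * t * ((κ * t ^ Q)⁻¹ * (κ * t ^ Q)⁻¹) ^ (1 / p) =
      6 * κ ^ (-(2 / p)) * t ^ (1 - 2 * Q / p) := by
    rw [← mul_inv, ← pow_two, Real.inv_rpow (by positivity),
      ← Real.rpow_natCast_mul (by positivity), Real.mul_rpow hκ.le (by positivity),
      ← Real.rpow_mul ht.le, mul_inv, ← Real.rpow_neg hκ.le, ← Real.rpow_neg ht.le,
      Real.rpow_sub ht, Real.rpow_one, Real.rpow_neg ht.le]
    push_cast
    ring_nf
  calc meanEDist F μ[|Metric.ball x s] μ[|Metric.ball y s']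
      ≤ ENNReal.ofReal (6 * t) * ((μ (Metric.ball x s))⁻¹ * (μ (Metric.ball y s'))⁻¹ *
          grrEnergy μ p F) ^ (1 / p) :=
        meanEDist_cond_cond_le hF hp measurableSet_ball measurableSet_ball hdiam
    _ ≤ ENNReal.ofReal (6 * t) * (ENNReal.ofReal (κ * t ^ Q)⁻¹ * ENNReal.ofReal (κ * t ^ Q)⁻¹ *
          grrEnergy μ p F) ^ (1 / p) := by
        gcongr
        exacts [hmass hx hts hsr, hmass hy hts' hsr']
    _ = _ := by
        rw [ENNReal.mul_rpow_of_nonneg _ _ (by positivity), ← ENNReal.ofReal_mul (by positivity),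
          ENNReal.ofReal_rpow_of_nonneg (by positivity) (by positivity), ← mul_assoc,
          ← ENNReal.ofReal_mul (by positivity), hexponents]

/-- The constant produced by chaining two points with Hölder exponent `β`: two geometric series of
ratio `2 ^ (-β)`, one per point, and the step that joins them. -/
def grrConst (β : ℝ) : ℝ := 6 * (1 + 2 * ((1 / 2) ^ β / (1 - (1 / 2) ^ β)))

lemma grrConst_pos {β : ℝ} (hβ : 0 < β) : 0 < grrConst β := by
  have : (0 : ℝ) < 1 - (1 / 2) ^ β :=
    sub_pos.2 (Real.rpow_lt_one (by norm_num) (by norm_num) hβ)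
  unfold grrConst
  positivity

lemma hasSum_div_two_pow_rpow {r β : ℝ} (hr : 0 ≤ r) (hβ : 0 < β) :
    HasSum (fun n : ℕ => (r / 2 ^ (n + 1)) ^ β) (r ^ β * ((1 / 2) ^ β / (1 - (1 / 2) ^ β))) := by
  have hterm (n : ℕ) : (r / 2 ^ (n + 1)) ^ β = r ^ β * ((1 / 2) ^ β * ((1 / 2) ^ β) ^ n) := by
    rw [← pow_succ', Real.rpow_pow_comm (by norm_num), ← Real.mul_rpow hr (by positivity),
      one_div_pow, mul_one_div]
  simp only [hterm, div_eq_mul_inv ((1 / 2 : ℝ) ^ β)]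
  exact ((hasSum_geometric_of_lt_one (by positivity)
    (Real.rpow_lt_one (by norm_num) (by norm_num) hβ)).mul_left _).mul_left _

lemma meanEDist_dirac_cond_ball_le (hF : Continuous F) {p κ Q r : ℝ} {z : X} (hp : 1 ≤ p)
    (hQ : 0 ≤ Q) (hβ : 0 < 1 - 2 * Q / p) (hr : 0 < r) (hz : IsLowerRegularAt μ κ Q r z) :
    meanEDist F (Measure.dirac z) μ[|Metric.ball z r] ≤
      ENNReal.ofReal (6 * κ ^ (-(2 / p)) * (r ^ (1 - 2 * Q / p) *
        ((1 / 2) ^ (1 - 2 * Q / p) / (1 - (1 / 2) ^ (1 - 2 * Q / p))))) *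
          grrEnergy μ p F ^ (1 / p) := by
  set β := 1 - 2 * Q / p
  have hκ := hz.pos
  have hradius_pos (n : ℕ) : 0 < r / 2 ^ n := by positivity
  have hradius_le (n : ℕ) : r / 2 ^ n ≤ r := div_le_self hr.le (one_le_pow₀ one_le_two)
  have hradius_succ (n : ℕ) : r / 2 ^ n = 2 * (r / 2 ^ (n + 1)) := by rw [pow_succ]; field_simp
  have hprob (n : ℕ) : IsProbabilityMeasure μ[|Metric.ball z (r / 2 ^ n)] :=
    hz.isProbabilityMeasure_cond_ball (hradius_pos n) (hradius_le n)
  have hstep (n : ℕ) : meanEDist F (Measure.dirac z) μ[|Metric.ball z (r / 2 ^ n)] ≤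
      meanEDist F (Measure.dirac z) μ[|Metric.ball z (r / 2 ^ (n + 1))] +
        ENNReal.ofReal (6 * κ ^ (-(2 / p)) * (r / 2 ^ (n + 1)) ^ β) *
          grrEnergy μ p F ^ (1 / p) := by
    refine (meanEDist_triangle (measurable_edist_map hF) _
      μ[|Metric.ball z (r / 2 ^ (n + 1))] _).trans (add_le_add_right ?_ _)
    exact meanEDist_cond_ball_le hF hp hQ hz hz (hradius_pos (n + 1)) le_rfl
      (by linarith [hradius_pos (n + 1)]) (hradius_le _)
      (by linarith [hradius_pos (n + 1), hradius_succ n]) (hradius_succ n).le (hradius_le n)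
      (by rw [dist_self]; linarith [hradius_pos (n + 1)])
  have hlim : Tendsto (fun n : ℕ => r / 2 ^ n) atTop (𝓝 0) :=
    tendsto_const_nhds.div_atTop (tendsto_pow_atTop_atTop_of_one_lt one_lt_two)
  have hchain := le_tsum_of_le_add_of_tendsto_zero hstep
    (tendsto_meanEDist_dirac_cond_ball (μ := μ) hF z hlim)
  have hsum := (hasSum_div_two_pow_rpow hr.le hβ).mul_left (6 * κ ^ (-(2 / p)))
  rw [pow_zero, div_one, ENNReal.tsum_mul_right, ← ENNReal.ofReal_tsum_of_nonneg
    (fun n => by positivity) hsum.summable, hsum.tsum_eq] at hchain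
  exact hchain

theorem edist_map_le_grrEnergy (hF : Continuous F) {p κ Q : ℝ} {x y : X} (hp : 1 ≤ p)
    (hQ : 0 ≤ Q) (hpQ : 2 * Q < p) (hx : IsLowerRegularAt μ κ Q (dist x y) x)
    (hy : IsLowerRegularAt μ κ Q (dist x y) y) :
    edist (F x) (F y) ≤
      ENNReal.ofReal (grrConst (1 - 2 * Q / p) * κ ^ (-(2 / p)) * dist x y ^ (1 - 2 * Q / p)) *
        grrEnergy μ p F ^ (1 / p) := by
  have hκ := hx.pos
  have hβ : 0 < 1 - 2 * Q / p := sub_pos.2 ((div_lt_one (by linarith)).2 hpQ)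
  rcases dist_nonneg.eq_or_lt' (a := dist x y) with hxy | hr
  · have : Inseparable x y := Metric.inseparable_iff.2 hxy
    simp [(this.map hF).edist_eq_zero]
  set r := dist x y
  set q : ℝ := (1 / 2) ^ (1 - 2 * Q / p) / (1 - (1 / 2) ^ (1 - 2 * Q / p)) with hq_def
  have hq : 0 ≤ q :=
    div_nonneg (by positivity) (sub_nonneg.2 (Real.rpow_le_one (by norm_num) (by norm_num) hβ.le))
  have := hx.isProbabilityMeasure_cond_ball hr le_rfl
  have := hy.isProbabilityMeasure_cond_ball hr le_rfl
  have hmeas := measurable_edist_map hF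
  have hx_ball := meanEDist_dirac_cond_ball_le hF hp hQ hβ hr hx
  have hy_ball := meanEDist_dirac_cond_ball_le hF hp hQ hβ hr hy
  have hbridge := meanEDist_cond_ball_le hF hp hQ hx hy hr le_rfl (by linarith) le_rfl le_rfl
    (by linarith) le_rfl (by linarith)
  calc edist (F x) (F y)
      = meanEDist F (Measure.dirac x) (Measure.dirac y) := (meanEDist_dirac_dirac hmeas x y).symm
    _ ≤ meanEDist F (Measure.dirac x) μ[|Metric.ball x r] +
          (meanEDist F μ[|Metric.ball x r] μ[|Metric.ball y r] +
            meanEDist F (Measure.dirac y) μ[|Metric.ball y r]) := by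
        rw [meanEDist_comm hmeas (Measure.dirac y)]
        refine (meanEDist_triangle hmeas _ μ[|Metric.ball x r] _).trans ?_
        gcongr
        exact meanEDist_triangle hmeas _ _ _
    _ ≤ _ := add_le_add hx_ball (add_le_add hbridge hy_ball)
    _ = _ := by
        rw [← add_mul, ← add_mul, ← ENNReal.ofReal_add (by positivity) (by positivity),
          ← ENNReal.ofReal_add (by positivity) (by positivity), grrConst, ← hq_def]
        ring_nf

end MetricMeasureSpace

/-! ### The weight and the weighted measure -/

section Weight

variable {d : ℕ} {α : ℝ}

lemma grrWeight_pos (d : ℕ) (α x : ℝ) : 0 < grrWeight d α x :=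
  inv_pos.2 (lt_max_of_lt_right one_pos)

lemma measurable_grrWeight (d : ℕ) (α : ℝ) : Measurable (grrWeight d α) := by
  unfold grrWeight
  fun_prop

lemma grrWeight_le_one (d : ℕ) (α x : ℝ) : grrWeight d α x ≤ 1 :=
  inv_le_one_of_one_le₀ (le_max_right _ _)

lemma grrWeight_le_mul_grrWeight (hα : 0 ≤ α) {x R : ℝ} (hx : 0 ≤ x) (hxR : x ≤ 3 * R) :
    grrWeight d α R ≤ 9 ^ d * 3 ^ α * grrWeight d α x := by
  have hR : 0 ≤ R := by linarith
  set L : ℝ → ℝ := fun x => max (Real.log x) 0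
  have hL_nonneg (x : ℝ) : 0 ≤ L x := le_max_right _ _
  have hL_eq (x : ℝ) : L x = Real.posLog x := max_comm _ _
  have hlog_three : Real.log 3 ≤ 2 :=
    (Real.log_le_sub_one_of_pos (by norm_num)).trans (by norm_num)
  have hLx : L x ≤ 2 + L R := by
    calc L x ≤ L (3 * R) := by simpa only [hL_eq] using Real.posLog_le_posLog hx hxR
      _ ≤ L 3 + L R := by simpa only [hL_eq] using Real.posLog_mul
      _ ≤ 2 + L R := by gcongr; exact max_le hlog_three zero_le_two
  have hweight : x ^ d * L x ^ α ≤ 9 ^ d * 3 ^ α * max (R ^ d * L R ^ α) 1 := by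
    rcases le_total (L R) 1 with hLR | hLR
    · have hR_le : R ≤ 3 := by
        rcases hR.eq_or_lt with rfl | hR_pos
        · norm_num
        · exact ((Real.log_le_iff_le_exp hR_pos).1 ((le_max_left _ _).trans hLR)).trans
            Real.exp_one_lt_three.le
      calc x ^ d * L x ^ α ≤ 9 ^ d * 3 ^ α := by gcongr <;> linarith
        _ ≤ _ := le_mul_of_one_le_right (by positivity) (le_max_right _ _)
    · calc x ^ d * L x ^ α ≤ (9 * R) ^ d * (3 * L R) ^ α := by gcongr <;> linarith
        _ = 9 ^ d * 3 ^ α * (R ^ d * L R ^ α) := by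
          rw [mul_pow, Real.mul_rpow (by norm_num) (hL_nonneg R)]; ring
        _ ≤ _ := by gcongr; exact le_max_left _ _
  have hone : 1 ≤ 9 ^ d * 3 ^ α * max (R ^ d * L R ^ α) 1 :=
    one_le_mul_of_one_le_of_one_le (one_le_mul_of_one_le_of_one_le
      (one_le_pow₀ (by norm_num)) (Real.one_le_rpow (by norm_num) hα)) (le_max_right _ _)
  change (max (R ^ d * L R ^ α) 1)⁻¹ ≤ 9 ^ d * 3 ^ α * (max (x ^ d * L x ^ α) 1)⁻¹
  rw [← div_eq_mul_inv, inv_le_comm₀ (by positivity) (by positivity), inv_div,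
    div_le_iff₀' (by positivity)]
  exact max_le hweight hone

lemma inv_grrWeight_rpow {R q : ℝ} (hR : 0 ≤ R) (hq : 0 ≤ q) :
    (grrWeight d α R)⁻¹ ^ q = max (R ^ (d * q) * (max (Real.log R) 0) ^ (α * q)) 1 := by
  have hlog : 0 ≤ max (Real.log R) 0 := le_max_right _ _
  rw [grrWeight, inv_inv, (Real.monotoneOn_rpow_Ici_of_exponent_nonneg hq).map_max
    (mem_Ici.2 (by positivity)) (mem_Ici.2 zero_le_one), Real.one_rpow,
    Real.mul_rpow (by positivity) (by positivity), ← Real.rpow_natCast_mul hR,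
    ← Real.rpow_mul hlog]

end Weight

/-- The measure `f_α(|x|) μ(dx)`, where `f_α` is the weight in dimension `d`. Integrating against
it turns the weighted functional `grrZ` into an unweighted energy. -/
def grrMeasure {E : Type*} [NormedAddCommGroup E] [MeasurableSpace E] (μ : Measure E) (d : ℕ)
    (α : ℝ) : Measure E :=
  μ.withDensity fun x => ENNReal.ofReal (grrWeight d α ‖x‖)

lemma integrableOn_Ioi_inv_mul_log_rpow {α : ℝ} (hα : 1 < α) :
    IntegrableOn (fun y : ℝ => y⁻¹ * Real.log y ^ (-α)) (Ioi (Real.exp 1)) := by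
  refine (integrableOn_comp_log_Ioi (fun y => y ^ (-α)) (Real.exp_pos 1)).2 ?_
  rw [Real.log_exp]
  exact integrableOn_Ioi_rpow_of_lt (neg_lt_neg hα) one_pos

lemma pow_mul_grrWeight_succ_le (n : ℕ) (α : ℝ) {y : ℝ} (hy : 1 < y) :
    y ^ n * grrWeight (n + 1) α y ≤ y⁻¹ * Real.log y ^ (-α) := by
  have hlog : 0 < Real.log y := Real.log_pos hy
  calc y ^ n * grrWeight (n + 1) α y ≤ y ^ n * (y ^ (n + 1) * Real.log y ^ α)⁻¹ := by
        rw [grrWeight, max_eq_left hlog.le]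
        gcongr
        exact le_max_left _ _
    _ = y⁻¹ * Real.log y ^ (-α) := by
        rw [Real.rpow_neg hlog.le, pow_succ]
        field_simp

lemma integrableOn_Ioi_pow_mul_grrWeight_succ (n : ℕ) {α : ℝ} (hα : 1 < α) :
    IntegrableOn (fun y : ℝ => y ^ n * grrWeight (n + 1) α y) (Ioi 0) := by
  have hmeas : Measurable fun y : ℝ => y ^ n * grrWeight (n + 1) α y :=
    (measurable_id.pow_const n).mul (measurable_grrWeight _ α)
  have hnonneg {y : ℝ} (hy : 0 < y) : 0 ≤ y ^ n * grrWeight (n + 1) α y :=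
    mul_nonneg (pow_nonneg hy.le n) (grrWeight_pos _ α y).le
  rw [← Ioc_union_Ioi_eq_Ioi (Real.exp_pos 1).le]
  refine IntegrableOn.union ?_ ?_
  · refine Measure.integrableOn_of_bounded (M := Real.exp 1 ^ n) measure_Ioc_lt_top.ne
      hmeas.aestronglyMeasurable ?_
    filter_upwards [ae_restrict_mem measurableSet_Ioc] with y hy
    rw [Real.norm_of_nonneg (hnonneg hy.1)]
    exact (mul_le_of_le_one_right (pow_nonneg hy.1.le n) (grrWeight_le_one _ α y)).trans
      (pow_le_pow_left₀ hy.1.le hy.2 n)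
  · refine (integrableOn_Ioi_inv_mul_log_rpow hα).mono' hmeas.aestronglyMeasurable ?_
    filter_upwards [ae_restrict_mem measurableSet_Ioi] with y hy
    rw [Real.norm_of_nonneg (hnonneg ((Real.exp_pos 1).trans hy))]
    exact pow_mul_grrWeight_succ_le n α ((Real.one_lt_exp_iff.2 one_pos).trans hy)

section WeightedMeasure

variable {E : Type*} [NormedAddCommGroup E] [NormedSpace ℝ E] [FiniteDimensional ℝ E]
  [MeasurableSpace E]

lemma measureReal_ball_zero_one_pos (μ : Measure E) [μ.IsAddHaarMeasure] :
    0 < μ.real (Metric.ball 0 1) :=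
  ENNReal.toReal_pos (Metric.measure_ball_pos μ 0 one_pos).ne' measure_ball_lt_top.ne

variable [BorelSpace E] {μ : Measure E} [μ.IsAddHaarMeasure] {d : ℕ} {α : ℝ}

lemma integrable_grrWeight_norm (hd : Module.finrank ℝ E = d) (hα : 1 < α) :
    Integrable (fun x : E => grrWeight d α ‖x‖) μ := by
  rcases d with _ | n
  · have := Module.finrank_zero_iff.1 hd
    exact .of_finite
  · have := Module.nontrivial_of_finrank_eq_succ hd
    rw [integrable_fun_norm_addHaar μ (f := grrWeight (n + 1) α), hd]
    exact integrableOn_Ioi_pow_mul_grrWeight_succ n hα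

lemma isFiniteMeasure_grrMeasure (hd : Module.finrank ℝ E = d) (hα : 1 < α) :
    IsFiniteMeasure (grrMeasure μ d α) :=
  isFiniteMeasure_withDensity_ofReal (integrable_grrWeight_norm hd hα).2

lemma isLowerRegularAt_grrMeasure [IsFiniteMeasure (grrMeasure μ d α)]
    (hd : Module.finrank ℝ E = d) (hα : 0 ≤ α) {z : E} {r R : ℝ} (hz : ‖z‖ ≤ R) (hr : r ≤ 2 * R) :
    IsLowerRegularAt (grrMeasure μ d α)
      (μ.real (Metric.ball 0 1) / (9 ^ d * 3 ^ α) * grrWeight d α R) d r z where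
  pos := by
    have := grrWeight_pos d α R
    have := measureReal_ball_zero_one_pos μ
    positivity
  measure_ball_lt_top := measure_lt_top _ _
  le_measure_ball s hs hsr := by
    have := (grrWeight_pos d α R).le
    calc ENNReal.ofReal (μ.real (Metric.ball 0 1) / (9 ^ d * 3 ^ α) * grrWeight d α R * s ^ (d : ℝ))
        = ENNReal.ofReal
            ((9 ^ d * 3 ^ α)⁻¹ * grrWeight d α R * s ^ d * μ.real (Metric.ball 0 1)) := by
          rw [Real.rpow_natCast]
          congr 1
          ring
      _ = ENNReal.ofReal ((9 ^ d * 3 ^ α)⁻¹ * grrWeight d α R) * μ (Metric.ball z s) := by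
          rw [ENNReal.ofReal_mul (by positivity), ENNReal.ofReal_mul (by positivity), mul_assoc,
            ofReal_measureReal measure_ball_lt_top.ne, Measure.addHaar_ball_of_pos μ z hs, hd]
      _ = ∫⁻ _ in Metric.ball z s, ENNReal.ofReal ((9 ^ d * 3 ^ α)⁻¹ * grrWeight d α R) ∂μ :=
          (setLIntegral_const _ _).symm
      _ ≤ ∫⁻ x in Metric.ball z s, ENNReal.ofReal (grrWeight d α ‖x‖) ∂μ := by
          refine setLIntegral_mono' measurableSet_ball fun x hx => ENNReal.ofReal_le_ofReal ?_
          rw [inv_mul_le_iff₀ (by positivity)]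
          refine grrWeight_le_mul_grrWeight hα (norm_nonneg x) ?_
          linarith [norm_le_norm_add_norm_sub' x z, dist_eq_norm x z, Metric.mem_ball.1 hx]
      _ = grrMeasure μ d α (Metric.ball z s) := (withDensity_apply _ measurableSet_ball).symm

theorem exists_edist_map_le_grrEnergy_grrMeasure (μ : Measure E) [μ.IsAddHaarMeasure]
    (hd : Module.finrank ℝ E = d) {p : ℝ} (hp : 2 * (d : ℝ) < p) (hα : 1 < α) :
    ∃ c₀ : ℝ, 0 < c₀ ∧ ∀ {Y : Type*} [PseudoEMetricSpace Y] {F : E → Y}, Continuous F →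
      ∀ x y, edist (F x) (F y) ≤
        ENNReal.ofReal c₀ * grrEnergy (grrMeasure μ d α) p F ^ (1 / p) *
          ENNReal.ofReal (dist x y ^ (1 - 2 * (d : ℝ) / p) *
            max ((max ‖x‖ ‖y‖) ^ (2 * (d : ℝ) / p) *
              (max (Real.log (max ‖x‖ ‖y‖)) 0) ^ (2 * α / p)) 1) := by
  have hp_pos : 0 < p := (by positivity : (0 : ℝ) ≤ 2 * d).trans_lt hp
  have hβ : 0 < 1 - 2 * (d : ℝ) / p := sub_pos.2 ((div_lt_one hp_pos).2 hp)
  have hgrr := grrConst_pos hβ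
  have hball := measureReal_ball_zero_one_pos μ
  refine ⟨grrConst (1 - 2 * d / p) *
    (μ.real (Metric.ball (0 : E) 1) / (9 ^ d * 3 ^ α)) ^ (-(2 / p)), by positivity,
    fun {Y} _ {F} hF x y => ?_⟩
  rcases d.eq_zero_or_pos with rfl | hd_pos
  · have := Module.finrank_zero_iff.1 hd
    simp [Subsingleton.elim x y]
  have hp_one : 1 ≤ p := by
    have : (1 : ℝ) ≤ d := by exact_mod_cast hd_pos
    linarith
  have := isFiniteMeasure_grrMeasure (μ := μ) hd hα
  set R := max ‖x‖ ‖y‖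
  have hxR : ‖x‖ ≤ R := le_max_left _ _
  have hyR : ‖y‖ ≤ R := le_max_right _ _
  have hR : 0 ≤ R := (norm_nonneg x).trans hxR
  have hxyR : dist x y ≤ 2 * R := by linarith [dist_le_norm_add_norm x y]
  have hregular {z : E} (hz : ‖z‖ ≤ R) := isLowerRegularAt_grrMeasure (μ := μ) hd
    (zero_le_one.trans hα.le) hz hxyR
  have hweight := (grrWeight_pos d α R).le
  have hconst (b r : ℝ) (hb : 0 ≤ b) : grrConst (1 - 2 * d / p) *
      (b * grrWeight d α R) ^ (-(2 / p)) * r = grrConst (1 - 2 * d / p) * b ^ (-(2 / p)) *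
        (r * max (R ^ (2 * (d : ℝ) / p) * (max (Real.log R) 0) ^ (2 * α / p)) 1) := by
    rw [Real.mul_rpow hb hweight, Real.rpow_neg hweight, ← Real.inv_rpow hweight,
      inv_grrWeight_rpow hR (by positivity)]
    ring_nf
  calc edist (F x) (F y) ≤ _ :=
        edist_map_le_grrEnergy hF hp_one d.cast_nonneg hp (hregular hxR) (hregular hyR)
    _ = _ := by
        rw [hconst _ _ (by positivity), ENNReal.ofReal_mul (by positivity), mul_right_comm]

end WeightedMeasure

/-! ### Random fields -/

section RandomField

variable {Ω X Y : Type*} [MeasurableSpace Ω] [PseudoEMetricSpace X] [MeasurableSpace X]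
  [OpensMeasurableSpace X] [SecondCountableTopology X] [PseudoEMetricSpace Y] {ν : Measure X}
  [SFinite ν] {F : Ω → X → Y}

lemma measurable_uncurry_div_edist_rpow
    (hF : Measurable fun q : Ω × X × X => edist (F q.1 q.2.1) (F q.1 q.2.2)) (p : ℝ) :
    Measurable fun q : Ω × X × X =>
      (edist (F q.1 q.2.1) (F q.1 q.2.2) / edist q.2.1 q.2.2) ^ p :=
  (hF.div (measurable_edist.comp measurable_snd)).pow_const p

lemma grrEnergy_eq_lintegral_prod
    (hF : Measurable fun q : Ω × X × X => edist (F q.1 q.2.1) (F q.1 q.2.2)) (p : ℝ) (ω : Ω) :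
    grrEnergy ν p (F ω) =
      ∫⁻ z, (edist (F ω z.1) (F ω z.2) / edist z.1 z.2) ^ p ∂(ν.prod ν) :=
  lintegral_lintegral (f := fun u v => (edist (F ω u) (F ω v) / edist u v) ^ p)
    ((measurable_uncurry_div_edist_rpow hF p).comp measurable_prodMk_left).aemeasurable

lemma measurable_grrEnergy
    (hF : Measurable fun q : Ω × X × X => edist (F q.1 q.2.1) (F q.1 q.2.2)) (p : ℝ) :
    Measurable fun ω => grrEnergy ν p (F ω) := by
  simp only [grrEnergy_eq_lintegral_prod hF]
  exact (measurable_uncurry_div_edist_rpow hF p).lintegral_prod_right'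

lemma lintegral_grrEnergy_le {P : Measure Ω} [SFinite P]
    (hF : Measurable fun q : Ω × X × X => edist (F q.1 q.2.1) (F q.1 q.2.2)) {p : ℝ} (hp : 0 ≤ p)
    {c : ℝ≥0∞} (hmoment : ∀ x y, ∫⁻ ω, edist (F ω x) (F ω y) ^ p ∂P ≤ c * edist x y ^ p) :
    ∫⁻ ω, grrEnergy ν p (F ω) ∂P ≤ c * ν univ ^ 2 := by
  have hquotient (z : X × X) :
      ∫⁻ ω, (edist (F ω z.1) (F ω z.2) / edist z.1 z.2) ^ p ∂P ≤ c := by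
    have hmeas : Measurable fun ω => edist (F ω z.1) (F ω z.2) ^ p :=
      (hF.comp (measurable_prodMk_right (y := z))).pow_const p
    calc ∫⁻ ω, (edist (F ω z.1) (F ω z.2) / edist z.1 z.2) ^ p ∂P
        = (∫⁻ ω, edist (F ω z.1) (F ω z.2) ^ p ∂P) / edist z.1 z.2 ^ p := by
          simp only [ENNReal.div_rpow_of_nonneg _ _ hp]
          exact lintegral_mul_const _ hmeas
      _ ≤ c := ENNReal.div_le_of_le_mul (hmoment z.1 z.2)
  calc ∫⁻ ω, grrEnergy ν p (F ω) ∂P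
      = ∫⁻ z, ∫⁻ ω, (edist (F ω z.1) (F ω z.2) / edist z.1 z.2) ^ p ∂P ∂(ν.prod ν) := by
        simp only [grrEnergy_eq_lintegral_prod hF]
        exact lintegral_lintegral_swap (measurable_uncurry_div_edist_rpow hF p).aemeasurable
    _ ≤ ∫⁻ _, c ∂(ν.prod ν) := lintegral_mono hquotient
    _ = c * ν univ ^ 2 := by
        rw [lintegral_const, ← univ_prod_univ, Measure.prod_prod, pow_two]

end RandomField

theorem grr_nonseparable_general {E : Type*} [NormedAddCommGroup E] [NormedSpace ℝ E]
    [FiniteDimensional ℝ E] [MeasurableSpace E] [BorelSpace E] (μ : Measure E)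
    [μ.IsAddHaarMeasure] {d : ℕ} (hd : Module.finrank ℝ E = d) {p α : ℝ} (hp : 2 * (d : ℝ) < p)
    (hα : 1 < α) :
    ∃ c₀ : ℝ, 0 < c₀ ∧
      ∀ {Ω Y : Type*} [MeasurableSpace Ω] [PseudoEMetricSpace Y] (P : Measure Ω) [SFinite P]
        {F : Ω → E → Y} {c : ℝ≥0∞}, c ≠ ⊤ →
        (Measurable fun q : Ω × E × E => edist (F q.1 q.2.1) (F q.1 q.2.2)) →
        (∀ ω, Continuous (F ω)) →
        (∀ x y, ∫⁻ ω, edist (F ω x) (F ω y) ^ p ∂P ≤ c * edist x y ^ p) →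
        (Measurable fun ω => grrEnergy (grrMeasure μ d α) p (F ω) ^ (1 / p)) ∧
          ∫⁻ ω, (grrEnergy (grrMeasure μ d α) p (F ω) ^ (1 / p)) ^ p ∂P < ⊤ ∧
          ∀ ω x y, edist (F ω x) (F ω y) ≤
            ENNReal.ofReal c₀ * grrEnergy (grrMeasure μ d α) p (F ω) ^ (1 / p) *
              ENNReal.ofReal (dist x y ^ (1 - 2 * (d : ℝ) / p) *
                max ((max ‖x‖ ‖y‖) ^ (2 * (d : ℝ) / p) *
                  (max (Real.log (max ‖x‖ ‖y‖)) 0) ^ (2 * α / p)) 1) := by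
  obtain ⟨c₀, hc₀, hpath⟩ := exists_edist_map_le_grrEnergy_grrMeasure μ hd hp hα
  have := isFiniteMeasure_grrMeasure (μ := μ) hd hα
  refine ⟨c₀, hc₀, fun P _ F c hc hmeas hcont hmoment =>
    ⟨(measurable_grrEnergy hmeas p).pow_const _, ?_, fun ω => hpath (hcont ω)⟩⟩
  have hp_pos : 0 < p := (by positivity : (0 : ℝ) ≤ 2 * d).trans_lt hp
  simp only [← ENNReal.rpow_mul, one_div_mul_cancel hp_pos.ne', ENNReal.rpow_one]
  exact (lintegral_grrEnergy_le hmeas hp_pos.le hmoment).trans_lt (by finiteness)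

lemma ofReal_unifDist_div_dist {T : ℝ} {d : ℕ} (F : EuclideanSpace ℝ (Fin d) → D0 T d)
    (x y : EuclideanSpace ℝ (Fin d)) :
    ENNReal.ofReal (unifDist (F x) (F y) / dist x y) = edist (F x) (F y) / edist x y := by
  rcases eq_or_ne x y with rfl | hxy
  · simp
  · rw [ENNReal.ofReal_div_of_pos (dist_pos.2 hxy), edist_dist x y, edist_dist (F x),
      dist_eq_unifDist]

lemma grrZ_eq {Ω : Type*} {T : ℝ} {d : ℕ} {p : ℝ} (hp : 0 < p) (α : ℝ)
    (φ : Ω → EuclideanSpace ℝ (Fin d) → D0 T d) :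
    grrZ p α φ = fun ω => grrEnergy (grrMeasure volume d α) p (φ ω) ^ (1 / p) := by
  ext ω
  have hdensity : Measurable fun x : EuclideanSpace ℝ (Fin d) =>
      ENNReal.ofReal (grrWeight d α ‖x‖) :=
    ((measurable_grrWeight d α).comp measurable_norm).ennreal_ofReal
  have hdensity_lt_top : ∀ᵐ x : EuclideanSpace ℝ (Fin d),
      ENNReal.ofReal (grrWeight d α ‖x‖) < ⊤ := ae_of_all _ fun _ => ENNReal.ofReal_lt_top
  rw [grrZ, grrEnergy, grrMeasure, lintegral_withDensity_eq_lintegral_mul_non_measurable _ hdensity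
    hdensity_lt_top]
  congr 1
  refine lintegral_congr fun x => ?_
  rw [Pi.mul_apply, lintegral_withDensity_eq_lintegral_mul_non_measurable _ hdensity
    hdensity_lt_top, ← lintegral_const_mul' _ _ ENNReal.ofReal_ne_top]
  refine lintegral_congr fun y => ?_
  rw [mul_assoc, mul_comm,
    ENNReal.ofReal_mul (mul_nonneg (grrWeight_pos d α _).le (grrWeight_pos d α _).le),
    ENNReal.ofReal_mul (grrWeight_pos d α _).le, mul_assoc, Pi.mul_apply,
    ← ENNReal.ofReal_rpow_of_nonneg (div_nonneg (unifDist_nonneg _ _) dist_nonneg) hp.le,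
    ofReal_unifDist_div_dist]

/-- **Generalized Garsia–Rodemich–Rumsey lemma for `(𝒟₀, 𝒟)`-valued random fields.**
If `φ : Ω × ℝ^d → 𝒟₀` is `ℱ ⊗ ℬ(ℝ^d)/𝒟`-measurable, `φ(ω,·)` is continuous for each
`ω`, and `E‖φ(·,x) − φ(·,y)‖₀^p ≤ c |x−y|^p` with `p > 2d`, then for `α > 1` the
functional `Z` is measurable and `p`-integrable, and, with a constant `c₀ = c₀(α,p,d)`,
`‖φ(ω,x) − φ(ω,y)‖₀ ≤ c₀ Z(ω) |x−y|^{1−2d/p} · max((|x|∨|y|)^{2d/p} (log⁺(|x|∨|y|))^{2α/p}, 1)`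
for all `ω, x, y`. -/
theorem grr_nonseparable (T : ℝ) (hT : 0 < T) (d : ℕ) (p α : ℝ)
    (hp : 2 * (d : ℝ) < p) (hα : 1 < α) :
    ∃ c₀ : ℝ, 0 < c₀ ∧
      ∀ (Ω : Type) (_ : MeasurableSpace Ω) (P : Measure Ω), IsProbabilityMeasure P →
        ∀ (φ : Ω → EuclideanSpace ℝ (Fin d) → D0 T d) (c : ℝ), 0 < c →
        @Measurable (Ω × EuclideanSpace ℝ (Fin d)) (D0 T d) inferInstance (Dsigma T d)
          (fun q => φ q.1 q.2) →
        (∀ ω, ContinuousInD0 (φ ω)) →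
        (∀ x y : EuclideanSpace ℝ (Fin d),
          ∫⁻ ω, ENNReal.ofReal (unifDist (φ ω x) (φ ω y) ^ p) ∂P
            ≤ ENNReal.ofReal (c * dist x y ^ p)) →
        (Measurable (grrZ p α φ) ∧
          (∫⁻ ω, grrZ p α φ ω ^ p ∂P) < ⊤ ∧
          ∀ (ω : Ω) (x y : EuclideanSpace ℝ (Fin d)),
            ENNReal.ofReal (unifDist (φ ω x) (φ ω y)) ≤
              ENNReal.ofReal c₀ * grrZ p α φ ω *
                ENNReal.ofReal (dist x y ^ (1 - 2 * (d : ℝ) / p) *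
                  max ((max ‖x‖ ‖y‖) ^ (2 * (d : ℝ) / p) *
                      (max (Real.log (max ‖x‖ ‖y‖)) 0) ^ (2 * α / p)) 1)) := by
  obtain ⟨c₀, hc₀, h⟩ := grr_nonseparable_general volume finrank_euclideanSpace_fin hp hα
  have hp_pos : 0 < p := (by positivity : (0 : ℝ) ≤ 2 * d).trans_lt hp
  refine ⟨c₀, hc₀, fun Ω _ P _ φ c hc hφ hcont hmoment => grrZ_eq hp_pos α φ ▸
    h P (c := .ofReal c) ENNReal.ofReal_ne_top (measurable_edist_uncurry_D0 hφ)
      (fun ω => (hcont ω).continuous) fun x y => ?_⟩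
  simpa only [edist_dist, dist_eq_unifDist, ENNReal.ofReal_mul hc.le,
    ENNReal.ofReal_rpow_of_nonneg (unifDist_nonneg _ _) hp_pos.le,
    ENNReal.ofReal_rpow_of_nonneg dist_nonneg hp_pos.le] using hmoment x y

end
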